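/- arXiv:2105.06094 — 2 statements merged into one kernel-verified Lean document; each statement's English description precedes it below -/
import Mathlib

section
/- Fix α > 0. A function φ : [0,∞) → [-∞,∞] makes FDPD_{φ,α} a valid divergence on Lebesgue probability densities in L_{μ,α} if and only if ψ(x) := φ(e^x) is convex and strictly increasing on [-∞, ∞) with ψ(ℝ) ⊆ ℝ. -/
open MeasureTheory ENNReal Set

/-- A probability density in `L_{μ,α}`: nonnegative (being `ℝ≥0∞`-valued), measurable,
integrating to `1`, with finite `(1+α)`-th power integral. -/
def IsDensity (μ : Measure ℝ) (α : ℝ) (f : ℝ → ℝ≥0∞) : Prop :=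
  Measurable f ∧ ∫⁻ x, f x ∂μ = 1 ∧ ∫⁻ x, f x ^ (1 + α) ∂μ < ⊤

/-- The functional density power divergence
`FDPD_{φ,α}(g,f) = φ(∫ f^{α+1}) − (1+1/α) φ(∫ f^α g) + (1/α) φ(∫ g^{α+1})`. -/
noncomputable def FDPD (φ : ℝ≥0∞ → EReal) (α : ℝ) (μ : Measure ℝ)
    (g f : ℝ → ℝ≥0∞) : EReal :=
  φ (∫⁻ x, f x ^ (α + 1) ∂μ)
    - ((1 + 1 / α : ℝ) : EReal) * φ (∫⁻ x, f x ^ α * g x ∂μ)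
    + ((1 / α : ℝ) : EReal) * φ (∫⁻ x, g x ^ (α + 1) ∂μ)

/-- `ψ` is convex on `[-∞,∞)` (in the extended-real sense). -/
def ERealConvexOn (ψ : EReal → EReal) : Prop :=
  ∀ x : EReal, x < ⊤ → ∀ y : EReal, y < ⊤ → ∀ t : ℝ, 0 < t → t < 1 →
    ψ ((t : EReal) * x + ((1 - t : ℝ) : EReal) * y) ≤
      (t : EReal) * ψ x + ((1 - t : ℝ) : EReal) * ψ y

/-- `FDPD_{φ,α}` is a valid divergence on densities in `L_{μ,α}`: it is nonnegative, and
vanishes exactly when the two densities agree `μ`-a.e. -/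
def IsValidDivergence (φ : ℝ≥0∞ → EReal) (α : ℝ) (μ : Measure ℝ) : Prop :=
  ∀ f g : ℝ → ℝ≥0∞, IsDensity μ α f → IsDensity μ α g →
    0 ≤ FDPD φ α μ g f ∧ (FDPD φ α μ g f = 0 ↔ f =ᵐ[μ] g)

/-- A monotone function satisfying a one-sided weighted convexity inequality is continuous. -/
lemma continuous_of_forall_lt_weighted {ψ : ℝ → ℝ} {w : ℝ} (hw0 : 0 < w) (hw1 : w < 1)
    (hψ : Monotone ψ)
    (h : ∀ a b c, c < w * a + (1 - w) * b → ψ c ≤ w * ψ a + (1 - w) * ψ b) :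
    Continuous ψ := by
  rw [continuous_iff_continuousAt]
  intro m
  rw [hψ.continuousAt_iff_leftLim_eq_rightLim]
  refine le_antisymm (hψ.leftLim_le_rightLim le_rfl) ?_
  have hright : Filter.Tendsto (fun ε : ℝ => ψ (m + ε)) (nhdsWithin 0 (Ioi 0))
      (nhds (Function.rightLim ψ m)) := by
    refine (hψ.tendsto_rightLim m).comp (tendsto_nhdsWithin_iff.2 ⟨?_, ?_⟩)
    · refine (Continuous.tendsto' (by fun_prop) _ _ (by simp)).mono_left nhdsWithin_le_nhds
    · filter_upwards [self_mem_nhdsWithin] with ε (hε : 0 < ε)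
      exact lt_add_of_pos_right m hε
  have hleft : Filter.Tendsto (fun ε : ℝ => ψ (m - w / 2 * ε)) (nhdsWithin 0 (Ioi 0))
      (nhds (Function.leftLim ψ m)) := by
    refine (hψ.tendsto_leftLim m).comp (tendsto_nhdsWithin_iff.2 ⟨?_, ?_⟩)
    · refine (Continuous.tendsto' (by fun_prop) _ _ (by simp)).mono_left nhdsWithin_le_nhds
    · filter_upwards [self_mem_nhdsWithin] with ε (hε : 0 < ε)
      exact sub_lt_self m (by positivity)
  have key : Function.rightLim ψ m
      ≤ w * Function.rightLim ψ m + (1 - w) * Function.leftLim ψ m := by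
    refine ge_of_tendsto ((hright.const_mul w).add (hleft.const_mul (1 - w))) ?_
    filter_upwards [self_mem_nhdsWithin] with ε (hε : 0 < ε)
    have hlt : m < w * (m + ε) + (1 - w) * (m - w / 2 * ε) := by
      have : 0 < w * ε * (1 + w) := by positivity
      nlinarith
    obtain ⟨c, hmc, hc⟩ := exists_between hlt
    exact (hψ.rightLim_le hmc).trans (h _ _ _ hc)
  nlinarith

/-- A monotone function satisfying a one-sided weighted convexity inequality for a single weight
is convex. -/
lemma convexOn_of_forall_lt_weighted {ψ : ℝ → ℝ} {w : ℝ} (hw0 : 0 < w) (hw1 : w < 1)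
    (hψ : Monotone ψ)
    (h : ∀ a b c, c < w * a + (1 - w) * b → ψ c ≤ w * ψ a + (1 - w) * ψ b) :
    ConvexOn ℝ univ ψ := by
  have hcont := continuous_of_forall_lt_weighted hw0 hw1 hψ h
  have hw : ∀ a b, ψ (w * a + (1 - w) * b) ≤ w * ψ a + (1 - w) * ψ b := fun a b =>
    le_of_tendsto (x := nhdsWithin _ (Iio _)) ((hcont.tendsto _).mono_left nhdsWithin_le_nhds)
      (Filter.mem_of_superset self_mem_nhdsWithin fun c (hc : c < _) => h a b c hc)
  refine LinearOrder.convexOn_of_lt convex_univ fun x _ y _ hxy t s ht hs hts => ?_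
  simp only [smul_eq_mul]
  set k := (ψ y - ψ x) / (y - x) with hk
  have hkxy : k * (y - x) = ψ y - ψ x := div_mul_cancel₀ _ (sub_pos.2 hxy).ne'
  set F : ℝ → ℝ := fun z => ψ z - k * z with hF
  have hFc : Continuous F := by fun_prop
  have hFw : ∀ a b, F (w * a + (1 - w) * b) ≤ w * F a + (1 - w) * F b := fun a b => by
    have := hw a b
    simp only [hF]; nlinarith
  have hFxy : F x = F y := by simp only [hF]; linarith
  obtain ⟨M, hM, hMmax⟩ := isCompact_Icc.exists_isMaxOn (nonempty_Icc.2 hxy.le) hFc.continuousOn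
  have hcomp : IsCompact (Icc x y ∩ F ⁻¹' {F M}) :=
    isCompact_Icc.inter_right (isClosed_singleton.preimage hFc)
  obtain ⟨c, ⟨hcI, hcM⟩, hcmin⟩ := hcomp.exists_isLeast ⟨M, hM, rfl⟩
  have hcM' : F c = F M := hcM
  have hMx : F M ≤ F x := by
    by_contra! hlt
    have hcx : x < c := lt_of_le_of_ne hcI.1 fun e => by rw [e, hcM'] at hlt; exact lt_irrefl _ hlt
    have hcy : c < y := lt_of_le_of_ne hcI.2 fun e => by
      rw [hFxy, ← e, hcM'] at hlt; exact lt_irrefl _ hlt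
    obtain ⟨ε, hε, hε1, hε2⟩ : ∃ ε, 0 < ε ∧ ε ≤ c - x ∧ ε ≤ y - c :=
      ⟨min (c - x) (y - c), lt_min (by linarith) (by linarith), min_le_left _ _, min_le_right _ _⟩
    have hwε : 0 < w * ε := by positivity
    have hwε' : 0 < (1 - w) * ε := mul_pos (by linarith) hε
    have h1I : c - (1 - w) * ε ∈ Icc x y := ⟨by nlinarith, by nlinarith⟩
    have h2I : c + w * ε ∈ Icc x y := ⟨by nlinarith, by nlinarith⟩
    have h1 : F (c - (1 - w) * ε) < F M := lt_of_le_of_ne (hMmax h1I) fun e => by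
      have := hcmin ⟨h1I, e⟩
      linarith
    have h2 : F (c + w * ε) ≤ F M := hMmax h2I
    have h3 := hFw (c - (1 - w) * ε) (c + w * ε)
    rw [show w * (c - (1 - w) * ε) + (1 - w) * (c + w * ε) = c by ring, hcM'] at h3
    nlinarith
  obtain rfl : t = 1 - s := by linarith
  have hz : F ((1 - s) * x + s * y) ≤ F x :=
    le_trans (hMmax ⟨by nlinarith, by nlinarith⟩ : F ((1 - s) * x + s * y) ≤ F M) hMx
  simp only [hF] at hz
  nlinarith

/-- Equality case of the weighted Hölder inequality for functions of unit mass. -/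
lemma ae_eq_of_one_le_lintegral_rpow_mul_rpow {μ : Measure ℝ} {u v : ℝ → ℝ≥0∞} {p q : ℝ}
    (hu : Measurable u) (hv : Measurable v) (hu1 : ∫⁻ x, u x ∂μ = 1) (hv1 : ∫⁻ x, v x ∂μ = 1)
    (hp : 0 < p) (hq : 0 < q) (hpq : p + q = 1)
    (h : 1 ≤ ∫⁻ x, u x ^ p * v x ^ q ∂μ) : u =ᵐ[μ] v := by
  have hc : (p⁻¹).HolderConjugate q⁻¹ := by
    constructor <;> simp [*]
  have hpow : ∀ {r : ℝ}, 0 < r → ∀ a : ℝ≥0∞, (a ^ r) ^ r⁻¹ = a := fun hr a => by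
    rw [← ENNReal.rpow_mul, mul_inv_cancel₀ hr.ne', ENNReal.rpow_one]
  have hdiv : ∀ {r : ℝ}, 0 < r → ∀ a : ℝ≥0∞, a / ENNReal.ofReal r⁻¹ = ENNReal.ofReal r * a :=
    fun hr a => by
      rw [ENNReal.ofReal_inv_of_pos hr, div_eq_mul_inv, inv_inv, mul_comm]
  have hint : ∫⁻ x, ENNReal.ofReal p * u x + ENNReal.ofReal q * v x ∂μ = 1 := by
    rw [lintegral_add_left (hu.const_mul _), lintegral_const_mul _ hu, lintegral_const_mul _ hv,
      hu1, hv1, mul_one, mul_one, ← ENNReal.ofReal_add hp.le hq.le, hpq, ENNReal.ofReal_one]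
  have hle : ∀ x, u x ^ p * v x ^ q ≤ ENNReal.ofReal p * u x + ENNReal.ofReal q * v x := fun x => by
    have := ENNReal.young_inequality (u x ^ p) (v x ^ q) hc
    rwa [hpow hp, hpow hq, hdiv hp, hdiv hq] at this
  have heq := ae_eq_of_ae_le_of_lintegral_le (Filter.Eventually.of_forall hle)
    (ne_top_of_le_ne_top (by simp [hint]) (lintegral_mono hle))
    (by fun_prop) (hint.trans_le h)
  filter_upwards [heq, ae_lt_top hu (by simp [hu1]), ae_lt_top hv (by simp [hv1])] with x hx hux hvx
  have := (ENNReal.young_inequality_eq_iff (u x ^ p) (v x ^ q) hc).1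
    (by rw [hpow hp, hpow hq, hdiv hp, hdiv hq]; exact hx)
  rcases this with h1 | h1 | h1
  · exact absurd h1.1 (ENNReal.rpow_ne_top_of_nonneg hp.le hux.ne)
  · exact absurd h1.2 (ENNReal.rpow_ne_top_of_nonneg hq.le hvx.ne)
  · rwa [hpow hp, hpow hq] at h1

/-- A density has a nonzero `(α + 1)`-th power integral. -/
lemma IsDensity.lintegral_rpow_ne_zero {μ : Measure ℝ} {α : ℝ} {f : ℝ → ℝ≥0∞} (hα : 0 < α)
    (hf : IsDensity μ α f) : ∫⁻ x, f x ^ (α + 1) ∂μ ≠ 0 := fun h => by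
  have h0 := ENNReal.ae_eq_zero_of_lintegral_rpow_eq_zero (by positivity) hf.1.aemeasurable h
  have h1 := hf.2.1
  rw [lintegral_congr_ae h0] at h1
  simp at h1

lemma IsDensity.lintegral_rpow_ne_top {μ : Measure ℝ} {α : ℝ} {f : ℝ → ℝ≥0∞}
    (hf : IsDensity μ α f) : ∫⁻ x, f x ^ (α + 1) ∂μ ≠ ⊤ := by
  rw [add_comm]
  exact hf.2.2.ne

/-- The `(α + 1)`-th power integral of a density is the exponential of a real number. -/
lemma IsDensity.exists_lintegral_rpow_eq_exp {μ : Measure ℝ} {α : ℝ} {f : ℝ → ℝ≥0∞} (hα : 0 < α)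
    (hf : IsDensity μ α f) : ∃ a : ℝ, ∫⁻ x, f x ^ (α + 1) ∂μ = EReal.exp (a : EReal) :=
  ⟨_, by rw [← ENNReal.log_pos_real (hf.lintegral_rpow_ne_zero hα) hf.lintegral_rpow_ne_top,
    ENNReal.exp_log]⟩

/-- Hölder's inequality for the cross term of the divergence. -/
lemma IsDensity.lintegral_rpow_mul_le {μ : Measure ℝ} {α : ℝ} {f g : ℝ → ℝ≥0∞} (hα : 0 < α)
    (hf : IsDensity μ α f) (hg : IsDensity μ α g) :
    ∫⁻ x, f x ^ α * g x ∂μ ≤ (∫⁻ x, f x ^ (α + 1) ∂μ) ^ (α / (α + 1))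
      * (∫⁻ x, g x ^ (α + 1) ∂μ) ^ (1 / (α + 1)) := by
  have := ENNReal.lintegral_mul_norm_pow_le (hf.1.pow_const (α + 1)).aemeasurable
    (hg.1.pow_const (α + 1)).aemeasurable (p := α / (α + 1)) (q := 1 / (α + 1)) (μ := μ)
    (by positivity) (by positivity) (by field_simp)
  have h1 : (α + 1) * (α / (α + 1)) = α := by field_simp
  have h2 : (α + 1) * (1 / (α + 1)) = 1 := by field_simp
  simpa only [← ENNReal.rpow_mul, h1, h2, ENNReal.rpow_one] using this

/-- Equality in Hölder's inequality for the cross term forces the densities to agree. -/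
lemma IsDensity.ae_eq_of_le_lintegral_rpow_mul {μ : Measure ℝ} {α : ℝ} {f g : ℝ → ℝ≥0∞}
    (hα : 0 < α) (hf : IsDensity μ α f) (hg : IsDensity μ α g)
    (h : (∫⁻ x, f x ^ (α + 1) ∂μ) ^ (α / (α + 1)) * (∫⁻ x, g x ^ (α + 1) ∂μ) ^ (1 / (α + 1))
      ≤ ∫⁻ x, f x ^ α * g x ∂μ) : f =ᵐ[μ] g := by
  have hfm := hf.1
  have hgm := hg.1
  have hA0 := hf.lintegral_rpow_ne_zero hα
  have hAt := hf.lintegral_rpow_ne_top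
  have hB0 := hg.lintegral_rpow_ne_zero hα
  have hBt := hg.lintegral_rpow_ne_top
  set A := ∫⁻ x, f x ^ (α + 1) ∂μ
  set B := ∫⁻ x, g x ^ (α + 1) ∂μ
  have hp : 0 < α / (α + 1) := by positivity
  have hq : 0 < 1 / (α + 1) := by positivity
  have h1 : (α + 1) * (α / (α + 1)) = α := by field_simp
  have h2 : (α + 1) * (1 / (α + 1)) = 1 := by field_simp
  have hD0 : A ^ (α / (α + 1)) * B ^ (1 / (α + 1)) ≠ 0 :=
    mul_ne_zero (by simp [hA0, hAt]) (by simp [hB0, hBt])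
  have hDt : A ^ (α / (α + 1)) * B ^ (1 / (α + 1)) ≠ ⊤ :=
    ENNReal.mul_ne_top (ENNReal.rpow_ne_top_of_nonneg hp.le hAt)
      (ENNReal.rpow_ne_top_of_nonneg hq.le hBt)
  have hprop : (fun x => f x ^ (α + 1) * A⁻¹) =ᵐ[μ] fun x => g x ^ (α + 1) * B⁻¹ := by
    refine ae_eq_of_one_le_lintegral_rpow_mul_rpow (p := α / (α + 1)) (q := 1 / (α + 1))
      (by fun_prop) (by fun_prop) ?_ ?_ hp hq (by field_simp) ?_
    · rw [lintegral_mul_const _ (by fun_prop), ENNReal.mul_inv_cancel hA0 hAt]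
    · rw [lintegral_mul_const _ (by fun_prop), ENNReal.mul_inv_cancel hB0 hBt]
    · have hpt : ∀ x, (f x ^ (α + 1) * A⁻¹) ^ (α / (α + 1)) * (g x ^ (α + 1) * B⁻¹) ^ (1 / (α + 1))
          = f x ^ α * g x * (A ^ (α / (α + 1)) * B ^ (1 / (α + 1)))⁻¹ := fun x => by
        rw [ENNReal.mul_rpow_of_nonneg _ _ hp.le, ENNReal.mul_rpow_of_nonneg _ _ hq.le,
          ← ENNReal.rpow_mul, ← ENNReal.rpow_mul, h1, h2, ENNReal.rpow_one, ENNReal.inv_rpow,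
          ENNReal.inv_rpow, ENNReal.mul_inv
            (Or.inr (ENNReal.rpow_ne_top_of_nonneg hq.le hBt))
            (Or.inl (ENNReal.rpow_ne_top_of_nonneg hp.le hAt))]
        ring
      simp_rw [hpt]
      rw [lintegral_mul_const _ (by fun_prop), ← ENNReal.mul_inv_cancel hD0 hDt]
      gcongr
  have hscale : f =ᵐ[μ] fun x => (B⁻¹ * A) ^ (1 / (α + 1)) * g x := by
    filter_upwards [hprop] with x hx
    have hfx : f x ^ (α + 1) = (B⁻¹ * A) * g x ^ (α + 1) := by
      calc f x ^ (α + 1) = f x ^ (α + 1) * A⁻¹ * A := by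
            rw [mul_assoc, ENNReal.inv_mul_cancel hA0 hAt, mul_one]
        _ = (B⁻¹ * A) * g x ^ (α + 1) := by rw [hx]; ring
    have := congrArg (· ^ (1 / (α + 1))) hfx
    simpa only [ENNReal.mul_rpow_of_nonneg _ _ hq.le, ← ENNReal.rpow_mul, h2, ENNReal.rpow_one]
      using this
  have hone : (B⁻¹ * A) ^ (1 / (α + 1)) = 1 := by
    have := hf.2.1
    rwa [lintegral_congr_ae hscale, lintegral_const_mul _ hgm, hg.2.1, mul_one] at this
  filter_upwards [hscale] with x hx
  rw [hx, hone, one_mul]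

/-- The sign of `p - (1 + 1/α) x + r/α` in terms of the weighted mean of `p` and `r`. -/
lemma EReal.nonneg_sub_add_iff {α : ℝ} (hα : 0 < α) (p r : ℝ) (x : EReal) :
    0 ≤ (p : EReal) - ((1 + 1 / α : ℝ) : EReal) * x + ((1 / α : ℝ) : EReal) * (r : EReal) ↔
      x ≤ ((α / (α + 1) * p + 1 / (α + 1) * r : ℝ) : EReal) := by
  have hpos : 0 < 1 + 1 / α := by positivity
  induction x with
  | bot =>
    rw [EReal.coe_mul_bot_of_pos hpos, ← EReal.coe_mul, EReal.sub_bot (EReal.coe_ne_bot _),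
      EReal.top_add_coe]
    simp
  | top =>
    rw [EReal.coe_mul_top_of_pos hpos, EReal.sub_top, EReal.bot_add]
    simp only [le_bot_iff, top_le_iff, EReal.coe_ne_top, iff_false]
    exact EReal.zero_ne_bot
  | coe x =>
    norm_cast
    rw [← _root_.sub_nonneg (b := x)]
    have : p - (1 + 1 / α) * x + 1 / α * r
        = (1 + 1 / α) * (α / (α + 1) * p + 1 / (α + 1) * r - x) := by field_simp; ring
    rw [this, mul_nonneg_iff_of_pos_left hpos]

/-- Vanishing of `p - (1 + 1/α) x + r/α` in terms of the weighted mean of `p` and `r`. -/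
lemma EReal.sub_add_eq_zero_iff {α : ℝ} (hα : 0 < α) (p r : ℝ) (x : EReal) :
    (p : EReal) - ((1 + 1 / α : ℝ) : EReal) * x + ((1 / α : ℝ) : EReal) * (r : EReal) = 0 ↔
      x = ((α / (α + 1) * p + 1 / (α + 1) * r : ℝ) : EReal) := by
  have hpos : 0 < 1 + 1 / α := by positivity
  induction x with
  | bot =>
    rw [EReal.coe_mul_bot_of_pos hpos, ← EReal.coe_mul, EReal.sub_bot (EReal.coe_ne_bot _),
      EReal.top_add_coe]
    simp only [EReal.top_ne_zero, false_iff]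
    exact (EReal.coe_ne_bot _).symm
  | top =>
    rw [EReal.coe_mul_top_of_pos hpos, EReal.sub_top, EReal.bot_add]
    simp only [EReal.bot_ne_zero, false_iff]
    exact (EReal.coe_ne_top _).symm
  | coe x =>
    norm_cast
    rw [← sub_eq_zero (a := x)]
    have : p - (1 + 1 / α) * x + 1 / α * r
        = -(1 + 1 / α) * (x - (α / (α + 1) * p + 1 / (α + 1) * r)) := by field_simp; ring
    rw [this, mul_eq_zero, or_iff_right (by linarith)]

/-- A convex, strictly increasing `ψ(x) = φ(eˣ)` that is finite on `ℝ` yields a valid divergence. -/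
lemma isValidDivergence_of_convex {μ : Measure ℝ} {α : ℝ} (hα : 0 < α) {φ : ℝ≥0∞ → EReal}
    (hmono : StrictMonoOn (fun x => φ (EReal.exp x)) (Iio (⊤ : EReal)))
    (hconv : ERealConvexOn fun x => φ (EReal.exp x))
    (hfin : ∀ x : ℝ, φ (EReal.exp (x : EReal)) ≠ ⊤ ∧ φ (EReal.exp (x : EReal)) ≠ ⊥) :
    IsValidDivergence φ α μ := by
  intro f g hf hg
  obtain ⟨a, ha⟩ := hf.exists_lintegral_rpow_eq_exp hα
  obtain ⟨b, hb⟩ := hg.exists_lintegral_rpow_eq_exp hα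
  have hle := hf.lintegral_rpow_mul_le hα hg
  have heq := hf.ae_eq_of_le_lintegral_rpow_mul hα hg
  have hcongr : f =ᵐ[μ] g →
      ∫⁻ x, f x ^ α * g x ∂μ = EReal.exp (a : EReal) ∧ EReal.exp (a : EReal) = EReal.exp b := by
    intro h
    have h1 : (fun x => f x ^ α * g x) =ᵐ[μ] fun x => f x ^ (α + 1) := by
      filter_upwards [h] with x hx
      rw [← hx, ENNReal.rpow_add_of_nonneg _ _ hα.le zero_le_one, ENNReal.rpow_one]
    refine ⟨by rw [lintegral_congr_ae h1, ha], ?_⟩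
    rw [← ha, ← hb]
    refine lintegral_congr_ae ?_
    filter_upwards [h] with x hx
    rw [hx]
  rw [FDPD, ha, hb]
  rw [ha, hb, ← EReal.exp_mul, ← EReal.exp_mul, ← EReal.exp_add, ← EReal.coe_mul, ← EReal.coe_mul,
    ← EReal.coe_add] at hle heq
  rw [← ENNReal.exp_log (∫⁻ x, f x ^ α * g x ∂μ)] at hle heq hcongr ⊢
  set c := ENNReal.log (∫⁻ x, f x ^ α * g x ∂μ)
  have hcm := EReal.exp_le_exp_iff.1 hle
  have hct : c < ⊤ := hcm.trans_lt (EReal.coe_lt_top _)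
  have hp1 : α / (α + 1) < 1 := by rw [div_lt_one (by positivity)]; linarith
  have hmid := hconv a (EReal.coe_lt_top _) b (EReal.coe_lt_top _) (α / (α + 1)) (by positivity) hp1
  rw [show 1 - α / (α + 1) = 1 / (α + 1) by field_simp; ring, ← EReal.coe_mul, ← EReal.coe_mul,
    ← EReal.coe_add, mul_comm _ a, mul_comm _ b] at hmid
  beta_reduce at hmid
  have hψc := hmono.monotoneOn hct (EReal.coe_lt_top _) hcm
  beta_reduce at hψc
  lift φ (EReal.exp a) to ℝ using hfin a with p hpa
  lift φ (EReal.exp b) to ℝ using hfin b with r hrb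
  rw [← EReal.coe_mul, ← EReal.coe_mul, ← EReal.coe_add] at hmid
  rw [EReal.nonneg_sub_add_iff hα, EReal.sub_add_eq_zero_iff hα]
  refine ⟨hψc.trans hmid, fun h => heq ?_, fun h => ?_⟩
  · rw [EReal.exp_le_exp_iff]
    rw [← h] at hmid
    exact (hmono.le_iff_le (EReal.coe_lt_top _) hct).1 hmid
  · obtain ⟨h1, h2⟩ := hcongr h
    have h3 : (p : EReal) = r := by rw [hpa, hrb, h2]
    rw [h1, ← hpa, ← EReal.coe_eq_coe_iff.1 h3, ← add_mul,
      show α / (α + 1) + 1 / (α + 1) = 1 by field_simp, one_mul]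

/-- The function taking the value `k` on `S`, `e` on `T` and `0` elsewhere, for disjoint `S`, `T`. -/
noncomputable def twoStep (S T : Set ℝ) (k e : ℝ≥0∞) (x : ℝ) : ℝ≥0∞ :=
  S.indicator (fun _ => k) x + T.indicator (fun _ => e) x

lemma measurable_twoStep {S T : Set ℝ} (hS : MeasurableSet S) (hT : MeasurableSet T)
    (k e : ℝ≥0∞) : Measurable (twoStep S T k e) :=
  (measurable_const.indicator hS).add (measurable_const.indicator hT)

lemma lintegral_twoStep {S T : Set ℝ} (hS : MeasurableSet S) (hT : MeasurableSet T)
    (k e : ℝ≥0∞) : ∫⁻ x, twoStep S T k e x = k * volume S + e * volume T := by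
  simp only [twoStep]
  rw [lintegral_add_left (measurable_const.indicator hS), lintegral_indicator_const hS,
    lintegral_indicator_const hT]

lemma twoStep_rpow {S T : Set ℝ} (hST : Disjoint S T) {p : ℝ} (hp : 0 < p) (k e : ℝ≥0∞) (x : ℝ) :
    twoStep S T k e x ^ p = twoStep S T (k ^ p) (e ^ p) x := by
  by_cases hxS : x ∈ S
  · simp [twoStep, hxS, disjoint_left.1 hST hxS]
  · by_cases hxT : x ∈ T <;> simp [twoStep, hxS, hxT, hp]

lemma twoStep_rpow_mul {S T T' : Set ℝ} (hST : Disjoint S T) (hST' : Disjoint S T')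
    (hTT' : Disjoint T T') {p : ℝ} (hp : 0 < p) (k e l e' : ℝ≥0∞) (x : ℝ) :
    twoStep S T k e x ^ p * twoStep S T' l e' x = S.indicator (fun _ => k ^ p * l) x := by
  rw [twoStep_rpow hST hp]
  by_cases hxS : x ∈ S
  · simp [twoStep, hxS, disjoint_left.1 hST hxS, disjoint_left.1 hST' hxS]
  · by_cases hxT : x ∈ T
    · simp [twoStep, hxS, disjoint_left.1 hTT' hxT]
    · simp [twoStep, hxS, hxT]

/-- Height and width of a tail completing a rectangle to prescribed mass and power integral. -/
lemma exists_tail {α k δ A : ℝ} (hα : 0 < α) (hkδ : k * δ < 1)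
    (hA : k ^ (α + 1) * δ < A) :
    ∃ e L : ℝ, 0 < e ∧ 0 < L ∧ k * δ + e * L = 1 ∧ k ^ (α + 1) * δ + e ^ (α + 1) * L = A := by
  have hm : 0 < 1 - k * δ := by linarith
  have hη : 0 < A - k ^ (α + 1) * δ := by linarith
  have he : 0 < ((A - k ^ (α + 1) * δ) / (1 - k * δ)) ^ α⁻¹ := by positivity
  refine ⟨((A - k ^ (α + 1) * δ) / (1 - k * δ)) ^ α⁻¹,
    (1 - k * δ) / ((A - k ^ (α + 1) * δ) / (1 - k * δ)) ^ α⁻¹, he, div_pos hm he, ?_, ?_⟩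
  · rw [mul_div_cancel₀ _ he.ne']; ring
  · rw [Real.rpow_add he, Real.rpow_one, ← Real.rpow_mul (by positivity),
      inv_mul_cancel₀ hα.ne', Real.rpow_one, mul_assoc, mul_div_cancel₀ _ he.ne',
      div_mul_cancel₀ _ hm.ne']
    ring

/-- A two-step function of prescribed mass and power integral is a density. -/
lemma isDensity_twoStep {α k δ e L A : ℝ} (hα : 0 < α) (hk : 0 ≤ k) (hδ : 0 < δ) (he : 0 < e)
    (hL : 0 < L) (h1 : k * δ + e * L = 1) (hA : k ^ (α + 1) * δ + e ^ (α + 1) * L = A)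
    {S T : Set ℝ} (hS : MeasurableSet S) (hT : MeasurableSet T) (hST : Disjoint S T)
    (hSδ : volume S = ENNReal.ofReal δ) (hTL : volume T = ENNReal.ofReal L) :
    IsDensity volume α (twoStep S T (ENNReal.ofReal k) (ENNReal.ofReal e)) ∧
      ∫⁻ x, twoStep S T (ENNReal.ofReal k) (ENNReal.ofReal e) x ^ (α + 1) = ENNReal.ofReal A := by
  have hpow : ∫⁻ x, twoStep S T (ENNReal.ofReal k) (ENNReal.ofReal e) x ^ (α + 1)
      = ENNReal.ofReal A := by
    simp_rw [twoStep_rpow hST (show 0 < α + 1 by positivity)]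
    rw [lintegral_twoStep hS hT, hSδ, hTL, ENNReal.ofReal_rpow_of_nonneg hk (by positivity),
      ENNReal.ofReal_rpow_of_nonneg he.le (by positivity), ← ENNReal.ofReal_mul (by positivity),
      ← ENNReal.ofReal_mul (by positivity), ← ENNReal.ofReal_add (by positivity) (by positivity),
      hA]
  refine ⟨⟨measurable_twoStep hS hT _ _, ?_, ?_⟩, hpow⟩
  · rw [lintegral_twoStep hS hT, hSδ, hTL, ← ENNReal.ofReal_mul hk, ← ENNReal.ofReal_mul he.le,
      ← ENNReal.ofReal_add (by positivity) (by positivity), h1, ENNReal.ofReal_one]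
  · rw [add_comm 1 α, hpow]
    exact ENNReal.ofReal_lt_top

/-- For a valid divergence, `φ` is finite at every positive real. -/
lemma IsValidDivergence.ne_top_ne_bot {α : ℝ} (hα : 0 < α) {φ : ℝ≥0∞ → EReal}
    (h : IsValidDivergence φ α volume) {A : ℝ} (hA : 0 < A) :
    φ (ENNReal.ofReal A) ≠ ⊤ ∧ φ (ENNReal.ofReal A) ≠ ⊥ := by
  obtain ⟨e, L, he, hL, h1, h2⟩ := exists_tail (k := 0) (δ := 1) (A := A) hα (by norm_num)
    (by rwa [Real.zero_rpow (by positivity), zero_mul])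
  obtain ⟨hf, hfA⟩ := isDensity_twoStep hα le_rfl one_pos he hL h1 h2
    (S := Ico 0 1) (T := Ico 1 (1 + L)) measurableSet_Ico measurableSet_Ico
    (Ico_disjoint_Ico_same) (by simp) (by simp)
  have hz := (h _ _ hf hf).2.2 Filter.EventuallyEq.rfl
  have hpos : 0 < 1 + 1 / α := by positivity
  rw [FDPD, hfA] at hz
  have hcross : ∫⁻ x, twoStep (Ico 0 1) (Ico 1 (1 + L)) (ENNReal.ofReal 0) (ENNReal.ofReal e) x ^ α
      * twoStep (Ico 0 1) (Ico 1 (1 + L)) (ENNReal.ofReal 0) (ENNReal.ofReal e) x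
      = ENNReal.ofReal A := by
    rw [← hfA]
    refine lintegral_congr fun x => ?_
    rw [ENNReal.rpow_add_of_nonneg _ _ hα.le zero_le_one, ENNReal.rpow_one]
  rw [hcross] at hz
  refine ⟨fun ht => ?_, fun hb => ?_⟩
  · rw [ht, EReal.coe_mul_top_of_pos hpos, EReal.sub_top, EReal.bot_add] at hz
    exact EReal.bot_ne_zero hz
  · rw [hb, EReal.bot_sub, EReal.bot_add] at hz
    exact EReal.bot_ne_zero hz

/-- The strict inequality obtained by testing a valid divergence on two-step densities. -/
lemma IsValidDivergence.lt_of_test {α : ℝ} (hα : 0 < α) {φ : ℝ≥0∞ → EReal}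
    (h : IsValidDivergence φ α volume) {k l δ A B p r : ℝ} (hk : 0 ≤ k) (hl : 0 ≤ l) (hδ : 0 < δ)
    (hkδ : k * δ < 1) (hlδ : l * δ < 1) (hA : k ^ (α + 1) * δ < A) (hB : l ^ (α + 1) * δ < B)
    (hp : φ (ENNReal.ofReal A) = p) (hr : φ (ENNReal.ofReal B) = r) :
    φ (ENNReal.ofReal (k ^ α * l * δ)) < ((α / (α + 1) * p + 1 / (α + 1) * r : ℝ) : EReal) := by
  obtain ⟨e, L, he, hL, h1, h2⟩ := exists_tail hα hkδ hA
  obtain ⟨e', L', he', hL', h1', h2'⟩ := exists_tail hα hlδ hB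
  have hST : Disjoint (Ico 0 δ) (Ico δ (δ + L)) := Ico_disjoint_Ico_same
  have hST' : Disjoint (Ico 0 δ) (Ico (-L') 0) := Ico_disjoint_Ico_same.symm
  have hTT' : Disjoint (Ico δ (δ + L)) (Ico (-L') 0) :=
    disjoint_left.2 fun x hx hx' => by linarith [hx.1, hx'.2]
  obtain ⟨hf, hfA⟩ := isDensity_twoStep hα hk hδ he hL h1 h2 measurableSet_Ico measurableSet_Ico
    hST (by simp) (by simp)
  obtain ⟨hg, hgB⟩ := isDensity_twoStep hα hl hδ he' hL' h1' h2' measurableSet_Ico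
    measurableSet_Ico hST' (by simp) (by simp)
  obtain ⟨h0, hiff⟩ := h _ _ hf hg
  rw [FDPD, hfA, hgB, hp, hr] at h0 hiff
  simp_rw [twoStep_rpow_mul hST hST' hTT' hα] at h0 hiff
  rw [lintegral_indicator_const measurableSet_Ico, Real.volume_Ico, sub_zero,
    ENNReal.ofReal_rpow_of_nonneg hk hα.le, ← ENNReal.ofReal_mul (by positivity),
    ← ENNReal.ofReal_mul (by positivity)] at h0 hiff
  rw [EReal.nonneg_sub_add_iff hα] at h0
  rw [EReal.sub_add_eq_zero_iff hα] at hiff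
  refine lt_of_le_of_ne h0 fun heq => ?_
  have hnull := ae_iff.1 (hiff.1 heq)
  have hT0 := measure_mono_null (s := Ico δ (δ + L)) (fun x hx => ?_) hnull
  · simp [hL.not_ge] at hT0
  · have hxS := disjoint_right.1 hST hx
    have hxT' := disjoint_left.1 hTT' hx
    simp [twoStep, hx, hxS, hxT', he]

/-- The inequality at exponential arguments, below the weighted mean. -/
lemma IsValidDivergence.lt_of_lt_weighted {α : ℝ} (hα : 0 < α) {φ : ℝ≥0∞ → EReal}
    (h : IsValidDivergence φ α volume) {a b c p r : ℝ}
    (hc : c < α / (α + 1) * a + 1 / (α + 1) * b)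
    (hp : φ (EReal.exp a) = p) (hr : φ (EReal.exp b) = r) :
    φ (EReal.exp c) < ((α / (α + 1) * p + 1 / (α + 1) * r : ℝ) : EReal) := by
  have hα1 : 0 < α + 1 := by positivity
  set η := α / (α + 1) * a + 1 / (α + 1) * b - c with hη
  have hη0 : 0 < η := sub_pos.2 hc
  set d := -(max |a| |b| + 1) / α with hd
  have hdα : α * d = -(max |a| |b| + 1) := by rw [hd]; field_simp
  have ha' : a ≤ max |a| |b| := (le_abs_self a).trans (le_max_left _ _)
  have hb' : b ≤ max |a| |b| := (le_abs_self b).trans (le_max_right _ _)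
  have hmass : ∀ z : ℝ, z ≤ max |a| |b| →
      Real.exp ((z - η - d) / (α + 1)) * Real.exp d < 1 := fun z hz => by
    rw [← Real.exp_add, Real.exp_lt_one_iff, show (z - η - d) / (α + 1) + d
      = (z - η + α * d) / (α + 1) by field_simp; ring]
    exact div_neg_of_neg_of_pos (by linarith) hα1
  have hpow : ∀ z : ℝ, Real.exp ((z - η - d) / (α + 1)) ^ (α + 1) * Real.exp d < Real.exp z :=
    fun z => by
      rw [← Real.exp_mul, ← Real.exp_add, Real.exp_lt_exp, div_mul_cancel₀ _ hα1.ne']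
      linarith
  have key := h.lt_of_test hα (Real.exp_nonneg _) (Real.exp_nonneg _) (Real.exp_pos d)
    (hmass a ha') (hmass b hb') (hpow a) (hpow b) hp hr
  rwa [← Real.exp_mul, ← Real.exp_add, ← Real.exp_add,
    show (a - η - d) / (α + 1) * α + (b - η - d) / (α + 1) + d = c by
      rw [hη]; field_simp; ring, ← EReal.exp_coe] at key

/-- A valid divergence comes from a convex, strictly increasing `ψ(x) = φ(eˣ)` finite on `ℝ`. -/
lemma IsValidDivergence.convex {α : ℝ} (hα : 0 < α) {φ : ℝ≥0∞ → EReal}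
    (h : IsValidDivergence φ α volume) :
    StrictMonoOn (fun x => φ (EReal.exp x)) (Iio (⊤ : EReal)) ∧
      ERealConvexOn (fun x => φ (EReal.exp x)) ∧
      ∀ x : ℝ, φ (EReal.exp (x : EReal)) ≠ ⊤ ∧ φ (EReal.exp (x : EReal)) ≠ ⊥ := by
  have hfin : ∀ x : ℝ, φ (EReal.exp (x : EReal)) ≠ ⊤ ∧ φ (EReal.exp (x : EReal)) ≠ ⊥ :=
    fun x => h.ne_top_ne_bot hα (Real.exp_pos x)
  choose ψ hψ using fun x : ℝ => (⟨_, (EReal.coe_toReal (hfin x).1 (hfin x).2).symm⟩ :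
    ∃ p : ℝ, φ (EReal.exp (x : EReal)) = p)
  have hα1 : α / (α + 1) + 1 / (α + 1) = 1 := by field_simp
  have hw0 : 0 < α / (α + 1) := by positivity
  have hw1 : α / (α + 1) < 1 := by linarith [show 0 < 1 / (α + 1) by positivity]
  have hw : 1 - α / (α + 1) = 1 / (α + 1) := by linarith
  have hlt : ∀ a b c, c < α / (α + 1) * a + 1 / (α + 1) * b →
      ψ c < α / (α + 1) * ψ a + 1 / (α + 1) * ψ b := fun a b c hc => by
    have := h.lt_of_lt_weighted hα hc (hψ a) (hψ b)
    rwa [hψ c, EReal.coe_lt_coe_iff] at this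
  have hstrict : StrictMono ψ := fun x y hxy => by
    have := hlt y y x (by rwa [← add_mul, hα1, one_mul])
    rwa [← add_mul, hα1, one_mul] at this
  have hbot : ∀ x : ℝ, φ (EReal.exp ⊥) < φ (EReal.exp (x : EReal)) := fun x => by
    have h0 : (0 : ℝ) ^ (α + 1) * 1 < Real.exp x := by
      rw [Real.zero_rpow (by positivity), zero_mul]
      exact Real.exp_pos x
    have := h.lt_of_test hα le_rfl le_rfl one_pos (by norm_num) (by norm_num) h0 h0 (hψ x) (hψ x)
    rwa [mul_zero, zero_mul, ENNReal.ofReal_zero, ← add_mul, hα1, one_mul, ← hψ x,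
      ← EReal.exp_bot] at this
  have hcvx : ConvexOn ℝ univ ψ := convexOn_of_forall_lt_weighted hw0 hw1 hstrict.monotone
    fun a b c hc => by rw [hw] at hc ⊢; exact (hlt a b c hc).le
  have hmid : ∀ (t : ℝ), 0 < t → t < 1 → ∀ x : EReal, x < ⊤ →
      φ (EReal.exp ⊥) ≤ (t : EReal) * φ (EReal.exp ⊥) + ((1 - t : ℝ) : EReal) * φ (EReal.exp x) := by
    intro t ht0 ht1 x hx
    have h1 : φ (EReal.exp ⊥) ≤ φ (EReal.exp x) := by
      induction x with
      | bot => exact le_rfl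
      | coe x => exact (hbot x).le
      | top => exact absurd hx (lt_irrefl _)
    calc φ (EReal.exp ⊥)
        = (t : EReal) * φ (EReal.exp ⊥) + ((1 - t : ℝ) : EReal) * φ (EReal.exp ⊥) := by
          rw [← EReal.right_distrib_of_nonneg (by exact_mod_cast ht0.le)
            (by exact_mod_cast (sub_pos.2 ht1).le), ← EReal.coe_add, add_sub_cancel, EReal.coe_one,
            one_mul]
      _ ≤ _ := by
          gcongr
  refine ⟨?_, ?_, hfin⟩
  · intro x hx y hy hxy
    induction y with
    | bot => exact absurd hxy not_lt_bot
    | top => exact absurd hy self_notMem_Iio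
    | coe y =>
      induction x with
      | bot => exact hbot y
      | top => exact absurd hx self_notMem_Iio
      | coe x =>
        beta_reduce
        rw [hψ x, hψ y, EReal.coe_lt_coe_iff]
        exact hstrict (EReal.coe_lt_coe_iff.1 hxy)
  · intro x hx y hy t ht0 ht1
    beta_reduce
    have ht1' : 0 < 1 - t := sub_pos.2 ht1
    induction x with
    | top => exact absurd hx (lt_irrefl _)
    | bot =>
      rw [EReal.coe_mul_bot_of_pos ht0, EReal.bot_add]
      exact hmid t ht0 ht1 y hy
    | coe x =>
      induction y with
      | top => exact absurd hy (lt_irrefl _)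
      | bot =>
        rw [EReal.coe_mul_bot_of_pos ht1', EReal.add_bot, add_comm]
        have := hmid (1 - t) ht1' (by linarith) x hx
        rwa [_root_.sub_sub_cancel] at this
      | coe y =>
        rw [← EReal.coe_mul, ← EReal.coe_mul, ← EReal.coe_add, hψ, hψ, hψ, ← EReal.coe_mul,
          ← EReal.coe_mul, ← EReal.coe_add, EReal.coe_le_coe_iff]
        exact hcvx.2 (mem_univ x) (mem_univ y) ht0.le ht1'.le (by ring)

/-- characterization of the FDPD class. For fixed `α > 0`, `FDPD_{φ,α}` is a
valid divergence on Lebesgue probability densities in `L_{μ,α}` if and only if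
`ψ(x) = φ(eˣ)` is convex and strictly increasing on `[-∞,∞)` with `ψ(ℝ) ⊆ ℝ`. -/
theorem fdpd_characterization
    (α : ℝ) (hα : 0 < α) (φ : ℝ≥0∞ → EReal) :
    IsValidDivergence φ α volume ↔
      (StrictMonoOn (fun x => φ (EReal.exp x)) (Iio (⊤ : EReal)) ∧
        ERealConvexOn (fun x => φ (EReal.exp x)) ∧
        ∀ x : ℝ, φ (EReal.exp (x : EReal)) ≠ ⊤ ∧ φ (EReal.exp (x : EReal)) ≠ ⊥) :=
  ⟨fun h => h.convex hα, fun h => isValidDivergence_of_convex hα h.1 h.2.1 h.2.2⟩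
end

section
/- For α > 0 and probability densities f, g with finite (1+α)-th power integrals, the density power divergence DPD_α(g,f) := ∫ f^{α+1} − (1+1/α) ∫ f^α g + (1/α) ∫ g^{α+1} is nonnegative, with equality iff f = g μ-a.e. -/
open MeasureTheory ENNReal Set

/-- Young's inequality for the exponents of the density power divergence, with its equality case. -/
theorem ENNReal.rpow_mul_le_and_eq_iff {α : ℝ} (hα : 0 < α) (a b : ℝ≥0∞) :
    (a ^ α * b ≤ ENNReal.ofReal (α / (1 + α)) * a ^ (α + 1)
        + ENNReal.ofReal (1 / (1 + α)) * b ^ (α + 1)) ∧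
      (a ≠ ⊤ → b ≠ ⊤ →
        (a ^ α * b = ENNReal.ofReal (α / (1 + α)) * a ^ (α + 1)
          + ENNReal.ofReal (1 / (1 + α)) * b ^ (α + 1) ↔ a = b)) := by
  have hpq : ((1 + α) / α).HolderConjugate (1 + α) := by
    rw [Real.holderConjugate_iff]
    constructor
    · rw [lt_div_iff₀ hα]; linarith
    · field_simp; ring
  have hpow : (a ^ α) ^ ((1 + α) / α) = a ^ (α + 1) := by
    rw [← ENNReal.rpow_mul]; congr 1; field_simp; ring
  have hrhs : (a ^ α) ^ ((1 + α) / α) / ENNReal.ofReal ((1 + α) / α)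
      + b ^ (1 + α) / ENNReal.ofReal (1 + α)
      = ENNReal.ofReal (α / (1 + α)) * a ^ (α + 1)
        + ENNReal.ofReal (1 / (1 + α)) * b ^ (α + 1) := by
    rw [hpow, ENNReal.div_eq_inv_mul, ENNReal.div_eq_inv_mul,
      ← ENNReal.ofReal_inv_of_pos (by positivity), ← ENNReal.ofReal_inv_of_pos (by positivity),
      inv_div, one_div, add_comm 1 α]
  rw [← hrhs]
  refine ⟨ENNReal.young_inequality _ _ hpq, fun ha hb => ?_⟩
  rw [ENNReal.young_inequality_eq_iff _ _ hpq, hpow, add_comm 1 α]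
  have : a ^ α ≠ ⊤ := ENNReal.rpow_ne_top_of_nonneg hα.le ha
  simp [(ENNReal.rpow_left_injective (show α + 1 ≠ 0 by positivity)).eq_iff, this, hb]

/-- The integrals in the density power divergence satisfy the integrated Young inequality, and
equality forces the functions to agree almost everywhere. -/
theorem lintegral_rpow_mul_le_and_eq_iff {X : Type*} [MeasurableSpace X] {μ : Measure X} {α : ℝ}
    (hα : 0 < α) {f g : X → ℝ≥0∞} (hf : Measurable f) (hg : Measurable g)
    (hfi : ∫⁻ x, f x ^ (α + 1) ∂μ ≠ ⊤) (hgi : ∫⁻ x, g x ^ (α + 1) ∂μ ≠ ⊤) :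
    (∫⁻ x, f x ^ α * g x ∂μ ≤ ENNReal.ofReal (α / (1 + α)) * ∫⁻ x, f x ^ (α + 1) ∂μ
        + ENNReal.ofReal (1 / (1 + α)) * ∫⁻ x, g x ^ (α + 1) ∂μ) ∧
      (∫⁻ x, f x ^ α * g x ∂μ = ENNReal.ofReal (α / (1 + α)) * ∫⁻ x, f x ^ (α + 1) ∂μ
        + ENNReal.ofReal (1 / (1 + α)) * ∫⁻ x, g x ^ (α + 1) ∂μ ↔ f =ᵐ[μ] g) := by
  have hR : ENNReal.ofReal (α / (1 + α)) * ∫⁻ x, f x ^ (α + 1) ∂μ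
        + ENNReal.ofReal (1 / (1 + α)) * ∫⁻ x, g x ^ (α + 1) ∂μ
      = ∫⁻ x, (ENNReal.ofReal (α / (1 + α)) * f x ^ (α + 1)
        + ENNReal.ofReal (1 / (1 + α)) * g x ^ (α + 1)) ∂μ := by
    rw [lintegral_add_left (by fun_prop), lintegral_const_mul _ (by fun_prop),
      lintegral_const_mul _ (by fun_prop)]
  have hRtop : ENNReal.ofReal (α / (1 + α)) * ∫⁻ x, f x ^ (α + 1) ∂μ
      + ENNReal.ofReal (1 / (1 + α)) * ∫⁻ x, g x ^ (α + 1) ∂μ ≠ ⊤ := by finiteness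
  have hle := fun x => (ENNReal.rpow_mul_le_and_eq_iff hα (f x) (g x)).1
  have hLE := lintegral_mono (μ := μ) hle
  have hfin : ∀ {h : X → ℝ≥0∞}, Measurable h → ∫⁻ x, h x ^ (α + 1) ∂μ ≠ ⊤ →
      ∀ᵐ x ∂μ, h x ≠ ⊤ := fun hm hi => by
    filter_upwards [ae_lt_top (by fun_prop) hi] with x hx htop
    simp [htop, ENNReal.top_rpow_of_pos (show 0 < α + 1 by positivity)] at hx
  have hae : ∀ᵐ x ∂μ, f x ^ α * g x = ENNReal.ofReal (α / (1 + α)) * f x ^ (α + 1)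
      + ENNReal.ofReal (1 / (1 + α)) * g x ^ (α + 1) ↔ f x = g x := by
    filter_upwards [hfin hf hfi, hfin hg hgi] with x
      using (ENNReal.rpow_mul_le_and_eq_iff hα (f x) (g x)).2
  rw [hR] at hRtop ⊢
  refine ⟨hLE, fun h => ?_, fun h => lintegral_congr_ae ?_⟩
  · have := ae_eq_of_ae_le_of_lintegral_le (Filter.Eventually.of_forall hle) (h ▸ hRtop)
      (by fun_prop) h.ge
    filter_upwards [this, hae] with x hx hiff using hiff.1 hx
  · filter_upwards [h, hae] with x hx hiff using hiff.2 hx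

/-- the density power divergence `DPD_α = FDPD_{id,α}`,
`DPD_α(g,f) = ∫ f^{α+1} − (1+1/α) ∫ f^α g + (1/α) ∫ g^{α+1}`, is nonnegative on densities
in `L_{μ,α}`, and vanishes iff the two densities agree `μ`-a.e. -/
theorem dpd_nonneg_and_eq_zero_iff
    (μ : Measure ℝ) (α : ℝ) (hα : 0 < α)
    (f g : ℝ → ℝ≥0∞) (hf : IsDensity μ α f) (hg : IsDensity μ α g) :
    0 ≤ FDPD (fun t => (t : EReal)) α μ g f ∧
      (FDPD (fun t => (t : EReal)) α μ g f = 0 ↔ f =ᵐ[μ] g) := by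
  obtain ⟨hfm, -, hfi⟩ := hf
  obtain ⟨hgm, -, hgi⟩ := hg
  rw [add_comm 1 α] at hfi hgi
  obtain ⟨hle, heq⟩ := lintegral_rpow_mul_le_and_eq_iff hα hfm hgm hfi.ne hgi.ne
  rw [← heq, FDPD]
  lift ∫⁻ x, f x ^ (α + 1) ∂μ to NNReal using hfi.ne with A
  lift ∫⁻ x, g x ^ (α + 1) ∂μ to NNReal using hgi.ne with B
  lift ∫⁻ x, f x ^ α * g x ∂μ to NNReal using ne_top_of_le_ne_top (by finiteness) hle with C
  have hRhs : ENNReal.ofReal (α / (1 + α)) * A + ENNReal.ofReal (1 / (1 + α)) * B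
      = ENNReal.ofReal (α / (1 + α) * A + 1 / (1 + α) * B) := by
    rw [ENNReal.ofReal_add (by positivity) (by positivity), ENNReal.ofReal_mul (by positivity),
      ENNReal.ofReal_mul (by positivity), ENNReal.ofReal_coe_nnreal, ENNReal.ofReal_coe_nnreal]
  have hFDPD : ((A : ℝ≥0∞) : EReal) - ((1 + 1 / α : ℝ) : EReal) * ((C : ℝ≥0∞) : EReal)
      + ((1 / α : ℝ) : EReal) * ((B : ℝ≥0∞) : EReal)
      = (((1 + α) / α * (α / (1 + α) * A + 1 / (1 + α) * B - C) : ℝ) : EReal) := by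
    have : (1 + α) / α * (α / (1 + α) * A + 1 / (1 + α) * B - C)
        = (A : ℝ) - (1 + 1 / α) * C + 1 / α * B := by field_simp; ring
    rw [this]
    rfl
  have hpos : 0 < (1 + α) / α := by positivity
  have hC : (C : ℝ≥0∞) = ENNReal.ofReal C := (ENNReal.ofReal_coe_nnreal).symm
  rw [hRhs, hC, ENNReal.ofReal_le_ofReal_iff (by positivity)] at hle
  rw [hRhs, hC, ENNReal.ofReal_eq_ofReal_iff (by positivity) (by positivity), ← hC, hFDPD]
  constructor
  · exact_mod_cast mul_nonneg hpos.le (sub_nonneg.2 hle)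
  · rw [EReal.coe_eq_zero, mul_eq_zero, or_iff_right hpos.ne', sub_eq_zero, eq_comm]
end
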